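/- arXiv:1906.03743 — 4 statements merged into one kernel-verified Lean document; each statement's English description precedes it below -/
import Mathlib

section
/- Let n be a positive integer and f : {-1,1}^n → ℝ. For every nonzero ε with |ε| ≤ 1/√n, we have |(1/ε)·(E_ε[f] − E_0[f]) − ∑_{i=1}^n f̂({i})| ≤ |ε| · n · √(Var_0(f)), where Var_0(f) = E_0[f²] − (E_0[f])² = ∑_{S ≠ ∅} f̂(S)² is the variance of f under uniform random signs. -/
open Finset

/-- The real sign `±1` associated to a Boolean, encoding `{-1,1}`. -/
noncomputable def sgn (b : Bool) : ℝ := if b then 1 else -1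

/-- Fourier coefficient `f̂(S) = 2^{-n} ∑_x f(x) ∏_{i∈S} x_i` of `f : {-1,1}^n → ℝ`. -/
noncomputable def walshCoeff {n : ℕ} (f : (Fin n → Bool) → ℝ) (S : Finset (Fin n)) : ℝ :=
  (2 ^ n : ℝ)⁻¹ * ∑ x : Fin n → Bool, f x * ∏ i ∈ S, sgn (x i)

/-- Expectation of `f` under `ε`-biased coins:
`E_ε[f] = ∑_x f(x) ∏_i (1 + ε·x_i)/2`. -/
noncomputable def biasedExp {n : ℕ} (f : (Fin n → Bool) → ℝ) (ε : ℝ) : ℝ :=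
  ∑ x : Fin n → Bool, f x * ∏ i : Fin n, (1 + ε * sgn (x i)) / 2

/-!
Expanding `∏ i, (1 + ε * x i)` gives `E_ε[f] = ∑ S, ε ^ #S * f̂(S)`, so the error of the first-order
expansion of `E_ε[f]` at `ε = 0` is `∑_{#S ≥ 2} ε ^ #S * f̂(S)`. By Cauchy–Schwarz and Parseval its
square is at most `((1 + ε²)ⁿ - 1 - n ε²) * Var_0(f)`, and the first factor is at most `(n ε²)²` as
soon as `n ε² ≤ 1`.
-/

section Real

theorem one_add_pow_sub_one_sub_mul_le_sq {t : ℝ} {n : ℕ} (ht : 0 ≤ t) (hnt : n * t ≤ 1) :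
    (1 + t) ^ n - 1 - n * t ≤ (n * t) ^ 2 := by
  have pow_le_exp : (1 + t) ^ n ≤ Real.exp (n * t) := by
    rw [Real.exp_nat_mul, add_comm]
    gcongr
    exact Real.add_one_le_exp t
  have exp_le : Real.exp (n * t) - 1 - n * t ≤ (n * t) ^ 2 :=
    le_of_abs_le (Real.abs_exp_sub_one_sub_id_le (by rwa [abs_of_nonneg (by positivity)]))
  linarith

theorem mul_sq_le_one_of_abs_le_one_div_sqrt {a x : ℝ} (ha : 0 ≤ a) (hx : |x| ≤ 1 / √a) :
    a * x ^ 2 ≤ 1 := by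
  calc a * x ^ 2 = a * |x| ^ 2 := by rw [sq_abs]
    _ ≤ a * (1 / √a) ^ 2 := by gcongr
    _ = a * a⁻¹ := by rw [div_pow, one_pow, Real.sq_sqrt ha, one_div]
    _ ≤ 1 := mul_inv_le_one

end Real

section SubsetSums

variable {ι M R : Type*} [Fintype ι]

theorem sum_finset_eq_empty_add_singleton_add [AddCommMonoid M] (g : Finset ι → M) :
    ∑ S, g S = g ∅ + ∑ i, g {i} + ∑ S with 2 ≤ #S, g S := by
  have card_lt_two : ({S | ¬ 2 ≤ #S} : Finset (Finset ι)) =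
      cons ∅ (univ.map ⟨singleton, singleton_injective⟩) (by simp) := by
    ext S
    simp [Nat.le_one_iff_eq_zero_or_eq_one, card_eq_one, eq_comm]
  rw [← sum_filter_not_add_sum_filter univ (2 ≤ #·), card_lt_two, sum_cons, sum_map]
  rfl

theorem sum_two_le_card_pow_card [CommRing R] (t : R) :
    ∑ S : Finset ι with 2 ≤ #S, t ^ #S =
      (1 + t) ^ Fintype.card ι - 1 - Fintype.card ι * t := by
  classical
  have sum_pow_card : ∑ S : Finset ι, t ^ #S = (1 + t) ^ Fintype.card ι := by
    simpa using (prod_one_add (s := (univ : Finset ι)) (f := fun _ => t)).symm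
  rw [← sum_pow_card, sum_finset_eq_empty_add_singleton_add]
  simp only [card_empty, pow_zero, card_singleton, pow_one, sum_const, card_univ, nsmul_eq_mul]
  ring

end SubsetSums

section Walsh

theorem sum_prod_sgn_mul_prod_sgn {ι : Type*} [Fintype ι] (x y : ι → Bool) :
    ∑ S : Finset ι, (∏ i ∈ S, sgn (x i)) * ∏ i ∈ S, sgn (y i) =
      if x = y then 2 ^ Fintype.card ι else 0 := by
  classical
  have sum_eq_prod : ∑ S : Finset ι, (∏ i ∈ S, sgn (x i)) * ∏ i ∈ S, sgn (y i) =
      ∏ i, (1 + sgn (x i) * sgn (y i)) := by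
    simp only [prod_one_add, powerset_univ, prod_mul_distrib]
  have one_add_sgn_mul_sgn (a b : Bool) : 1 + sgn a * sgn b = if a = b then 2 else 0 := by
    cases a <;> cases b <;> norm_num [sgn]
  simp only [sum_eq_prod, one_add_sgn_mul_sgn, prod_ite_zero, mem_univ, forall_const,
    ← funext_iff, prod_const, card_univ]

variable {n : ℕ} (f : (Fin n → Bool) → ℝ) (ε : ℝ)

theorem biasedExp_eq_sum_walshCoeff :
    biasedExp f ε = ∑ S, ε ^ #S * walshCoeff f S := by
  have prod_expand (x : Fin n → Bool) :
      ∏ i, (1 + ε * sgn (x i)) / 2 = (2 ^ n)⁻¹ * ∑ S, ε ^ #S * ∏ i ∈ S, sgn (x i) := by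
    rw [prod_div_distrib, prod_one_add, div_eq_inv_mul]
    simp only [powerset_univ, prod_mul_distrib, prod_const, card_univ, Fintype.card_fin]
  simp only [biasedExp, walshCoeff, prod_expand, mul_sum]
  rw [sum_comm]
  exact sum_congr rfl fun S _ => sum_congr rfl fun x _ => by ring

theorem biasedExp_zero : biasedExp f 0 = (2 ^ n)⁻¹ * ∑ x, f x := by
  simp [biasedExp, ← sum_mul, mul_comm]

theorem walshCoeff_empty : walshCoeff f ∅ = biasedExp f 0 := by
  simp [walshCoeff, biasedExp_zero]

theorem sum_walshCoeff_sq : ∑ S, walshCoeff f S ^ 2 = biasedExp (fun x => f x ^ 2) 0 := by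
  have walshCoeff_sq_eq (S : Finset (Fin n)) : walshCoeff f S ^ 2 = (2 ^ n)⁻¹ ^ 2 *
      ∑ x, ∑ y, f x * f y * ((∏ i ∈ S, sgn (x i)) * ∏ i ∈ S, sgn (y i)) := by
    simp only [walshCoeff, mul_pow, pow_two (∑ _, _), sum_mul_sum, mul_mul_mul_comm (f _)]
  calc ∑ S, walshCoeff f S ^ 2
      = (2 ^ n)⁻¹ ^ 2 * ∑ x, ∑ y, f x * f y *
          ∑ S : Finset (Fin n), (∏ i ∈ S, sgn (x i)) * ∏ i ∈ S, sgn (y i) := by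
        simp only [walshCoeff_sq_eq, ← mul_sum]
        rw [sum_comm]
        simp only [mul_sum, sum_comm (γ := Finset (Fin n))]
    _ = (2 ^ n)⁻¹ ^ 2 * ∑ x, f x ^ 2 * 2 ^ n := by
        simp [sum_prod_sgn_mul_prod_sgn, sq]
    _ = biasedExp (fun x => f x ^ 2) 0 := by
        rw [biasedExp_zero, ← sum_mul]
        field_simp

theorem sum_two_le_card_walshCoeff_sq_le :
    ∑ S with 2 ≤ #S, walshCoeff f S ^ 2 ≤
      biasedExp (fun x => f x ^ 2) 0 - biasedExp f 0 ^ 2 := by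
  have singletons_nonneg : 0 ≤ ∑ i, walshCoeff f {i} ^ 2 := by positivity
  rw [← sum_walshCoeff_sq, ← walshCoeff_empty, sum_finset_eq_empty_add_singleton_add]
  linarith

theorem biasedExp_sub_biasedExp_zero_sub_mul_sum_walshCoeff :
    biasedExp f ε - biasedExp f 0 - ε * ∑ i, walshCoeff f {i} =
      ∑ S with 2 ≤ #S, ε ^ #S * walshCoeff f S := by
  rw [biasedExp_eq_sum_walshCoeff f ε, sum_finset_eq_empty_add_singleton_add, ← walshCoeff_empty]
  simp only [card_empty, pow_zero, one_mul, card_singleton, pow_one, ← mul_sum]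
  ring

theorem abs_biasedExp_sub_biasedExp_zero_sub_mul_sum_walshCoeff_le :
    |biasedExp f ε - biasedExp f 0 - ε * ∑ i, walshCoeff f {i}| ≤
      √((1 + ε ^ 2) ^ n - 1 - n * ε ^ 2) *
        √(biasedExp (fun x => f x ^ 2) 0 - biasedExp f 0 ^ 2) := by
  have sum_weights : ∑ S : Finset (Fin n) with 2 ≤ #S, (ε ^ #S) ^ 2 =
      (1 + ε ^ 2) ^ n - 1 - n * ε ^ 2 := by
    simp only [pow_right_comm ε _ 2, sum_two_le_card_pow_card, Fintype.card_fin]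
  rw [biasedExp_sub_biasedExp_zero_sub_mul_sum_walshCoeff, ← sum_weights,
    ← Real.sqrt_mul (by positivity)]
  refine Real.abs_le_sqrt ((sum_mul_sq_le_sq_mul_sq _ _ _).trans ?_)
  gcongr
  exact sum_two_le_card_walshCoeff_sq_le f

end Walsh

/-- for nonzero |ε| ≤ 1/√n,
|(1/ε)(E_ε[f]−E_0[f]) − ∑_i f̂({i})| ≤ |ε|·n·√(Var_0(f)), where
Var_0(f) = E_0[f²] − (E_0[f])². -/
theorem coin_deriv_error_le_var (n : ℕ) (hn : 0 < n) (f : (Fin n → Bool) → ℝ)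
    (ε : ℝ) (hε0 : ε ≠ 0) (hε : |ε| ≤ 1 / Real.sqrt n) :
    |(1 / ε) * (biasedExp f ε - biasedExp f 0) - ∑ i : Fin n, walshCoeff f {i}| ≤
      |ε| * n * Real.sqrt (biasedExp (fun x => f x ^ 2) 0 - biasedExp f 0 ^ 2) := by
  have sqrt_weights_le : √((1 + ε ^ 2) ^ n - 1 - n * ε ^ 2) ≤ n * ε ^ 2 :=
    Real.sqrt_le_iff.mpr ⟨by positivity, one_add_pow_sub_one_sub_mul_le_sq (sq_nonneg ε)
      (mul_sq_le_one_of_abs_le_one_div_sqrt n.cast_nonneg hε)⟩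
  have error_eq : (1 / ε) * (biasedExp f ε - biasedExp f 0) - ∑ i, walshCoeff f {i} =
      (biasedExp f ε - biasedExp f 0 - ε * ∑ i, walshCoeff f {i}) / ε := by
    field_simp
  rw [error_eq, abs_div, div_le_iff₀ (abs_pos.mpr hε0)]
  calc |biasedExp f ε - biasedExp f 0 - ε * ∑ i, walshCoeff f {i}|
      ≤ √((1 + ε ^ 2) ^ n - 1 - n * ε ^ 2) *
          √(biasedExp (fun x => f x ^ 2) 0 - biasedExp f 0 ^ 2) :=
        abs_biasedExp_sub_biasedExp_zero_sub_mul_sum_walshCoeff_le f ε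
    _ ≤ n * ε ^ 2 * √(biasedExp (fun x => f x ^ 2) 0 - biasedExp f 0 ^ 2) := by gcongr
    _ = |ε| * n * √(biasedExp (fun x => f x ^ 2) 0 - biasedExp f 0 ^ 2) * |ε| := by
        rw [← sq_abs ε]
        ring
end

section
/- Let n be a positive integer and f : {-1,1}^n → ℝ. For every nonzero ε with |ε| ≤ 1/(2√n), we have |(1/ε)·(E_ε[f] − E_0[f]) − ∑_{i=1}^n f̂({i})| ≤ 2 · |ε| · n · √(max_{2 ≤ k ≤ n} ∑_{|S| = k} f̂(S)²). -/
open Finset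

/-!
Expanding the product of biases gives `E_ε[f] = ∑ k, ε ^ k * L k`, where `L k` is the sum of the
level-`k` Fourier coefficients, so the error of the difference quotient is
`∑ k ≥ 2, ε ^ (k - 1) * L k`. By Cauchy–Schwarz over the `n.choose k ≤ n ^ k` sets at level `k`,
`|L k| ≤ √n ^ k * √W` whenever `W` bounds the Fourier weight of every level `k ≥ 2`. The error is
thus dominated by a geometric series of ratio `|ε| * √n ≤ 1 / 2`.
-/

lemma le_ciSup_finset_mem {ι α : Type*} [ConditionallyCompleteLattice α] (s : Finset ι)
    (g : ι → α) {i : ι} (hi : i ∈ s) : g i ≤ ⨆ j ∈ s, g j := by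
  have range_subset : (Set.range fun j => ⨆ _ : j ∈ s, g j) ⊆ insert (sSup ∅) (g '' s) := by
    rintro _ ⟨j, rfl⟩
    by_cases hj : j ∈ s
    · exact Or.inr ⟨j, hj, by simp [hj]⟩
    · exact Or.inl (by simp [ciSup_eq_ite, hj])
  have : Nonempty α := ⟨g i⟩
  have bdd : BddAbove (Set.range fun j => ⨆ _ : j ∈ s, g j) :=
    (((s.finite_toSet.image g).insert _).subset range_subset).bddAbove
  simpa [hi] using le_ciSup bdd i

lemma abs_sum_range_pow_mul_le {a : ℕ → ℝ} {ε s C : ℝ} {N : ℕ} (hs : 0 ≤ s) (hC : 0 ≤ C)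
    (hεs : |ε| * s < 1) (ha : ∀ k ∈ range N, |a k| ≤ C * s ^ k) :
    |∑ k ∈ range N, ε ^ k * a k| ≤ C / (1 - |ε| * s) := by
  have geom_sum_le : ∑ k ∈ range N, (|ε| * s) ^ k ≤ 1 / (1 - |ε| * s) := by
    simpa using geom_sum_Ico_le_of_lt_one (m := 0) (n := N) (by positivity) hεs
  calc |∑ k ∈ range N, ε ^ k * a k|
      ≤ ∑ k ∈ range N, |ε ^ k * a k| := abs_sum_le_sum_abs _ _
    _ ≤ ∑ k ∈ range N, C * (|ε| * s) ^ k := by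
        refine sum_le_sum fun k hk => ?_
        rw [abs_mul, abs_pow, mul_pow, mul_left_comm]
        gcongr
        exact ha k hk
    _ = C * ∑ k ∈ range N, (|ε| * s) ^ k := (mul_sum _ _ _).symm
    _ ≤ C * (1 / (1 - |ε| * s)) := by gcongr
    _ = C / (1 - |ε| * s) := mul_one_div _ _

/-- The sum of the Fourier coefficients of `f` at level `k`, which is the coefficient of `ε ^ k`
in the polynomial `E_ε[f]`. -/
noncomputable def levelSum {n : ℕ} (f : (Fin n → Bool) → ℝ) (k : ℕ) : ℝ :=
  ∑ S : Finset (Fin n) with S.card = k, walshCoeff f S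

/-- The Fourier weight of `f` at level `k`, usually written `W^k[f]`: the sum of the squares of the
Fourier coefficients at that level. -/
noncomputable def levelWeight {n : ℕ} (f : (Fin n → Bool) → ℝ) (k : ℕ) : ℝ :=
  ∑ S : Finset (Fin n) with S.card = k, walshCoeff f S ^ 2

section

variable {n : ℕ} (f : (Fin n → Bool) → ℝ)

lemma levelSum_one : levelSum f 1 = ∑ i, walshCoeff f {i} := by
  simp [levelSum, univ_filter_card_eq, powersetCard_one]

lemma levelSum_eq_zero_of_lt {k : ℕ} (hk : n < k) : levelSum f k = 0 := by
  rw [levelSum, univ_filter_card_eq, powersetCard_eq_empty.2 (by simpa using hk), sum_empty]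

lemma levelSum_sq_le (k : ℕ) : levelSum f k ^ 2 ≤ n.choose k * levelWeight f k := by
  simpa [levelSum, levelWeight, univ_filter_card_eq] using
    sq_sum_le_card_mul_sum_sq (s := powersetCard k (univ : Finset (Fin n))) (f := walshCoeff f)

lemma levelWeight_nonneg (k : ℕ) : 0 ≤ levelWeight f k :=
  sum_nonneg fun _ _ => sq_nonneg _

lemma abs_levelSum_le (k : ℕ) : |levelSum f k| ≤ √n ^ k * √(levelWeight f k) := by
  have choose_le : (n.choose k : ℝ) ≤ n ^ k := mod_cast n.choose_le_pow k
  have sqrt_pow : √((n : ℝ) ^ k) = √n ^ k := by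
    rw [Real.sqrt_eq_iff_eq_sq (by positivity) (by positivity), pow_right_comm,
      Real.sq_sqrt n.cast_nonneg]
  calc |levelSum f k|
      ≤ √(n ^ k * levelWeight f k) := Real.abs_le_sqrt <| (levelSum_sq_le f k).trans <|
        mul_le_mul_of_nonneg_right choose_le (levelWeight_nonneg f k)
    _ = √n ^ k * √(levelWeight f k) := by rw [Real.sqrt_mul (by positivity), sqrt_pow]

lemma biasedExp_eq_sum_pow_card_mul_walshCoeff (ε : ℝ) :
    biasedExp f ε = ∑ S : Finset (Fin n), ε ^ S.card * walshCoeff f S := by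
  have density_expand (x : Fin n → Bool) : ∏ i, (1 + ε * sgn (x i)) / 2 =
      ∑ S : Finset (Fin n), ε ^ S.card * ((2 ^ n)⁻¹ * ∏ i ∈ S, sgn (x i)) := by
    rw [prod_div_distrib, prod_one_add, powerset_univ, sum_div]
    refine sum_congr rfl fun S _ => ?_
    rw [prod_mul_distrib, prod_const, prod_const, card_univ, Fintype.card_fin]
    ring
  simp_rw [biasedExp, density_expand, walshCoeff, mul_sum]
  rw [sum_comm]
  exact sum_congr rfl fun S _ => sum_congr rfl fun x _ => by ring

lemma biasedExp_eq_sum_pow_mul_levelSum (ε : ℝ) {N : ℕ} (hN : n < N) :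
    biasedExp f ε = ∑ k ∈ range N, ε ^ k * levelSum f k := by
  have card_mem_range (S : Finset (Fin n)) : S.card ∈ range N :=
    mem_range.2 ((card_finset_fin_le S).trans_lt hN)
  rw [biasedExp_eq_sum_pow_card_mul_walshCoeff,
    ← sum_fiberwise_of_maps_to fun S _ => card_mem_range S]
  refine sum_congr rfl fun k _ => ?_
  rw [levelSum, mul_sum]
  exact sum_congr rfl fun S hS => by rw [(mem_filter.1 hS).2]

lemma biasedExp_zero_s5 : biasedExp f 0 = levelSum f 0 := by
  rw [biasedExp_eq_sum_pow_mul_levelSum f 0 n.lt_succ_self, sum_range_succ']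
  simp

lemma biasedExp_sub_linear (ε : ℝ) :
    biasedExp f ε - biasedExp f 0 - ε * levelSum f 1 =
      ε ^ 2 * ∑ k ∈ range n, ε ^ k * levelSum f (k + 2) := by
  rw [biasedExp_eq_sum_pow_mul_levelSum f ε (N := n + 2) (by lia), biasedExp_zero_s5,
    sum_range_succ', sum_range_succ', mul_sum]
  ring_nf

variable {f}

lemma abs_biasedExp_sub_linear_le {ε W : ℝ} (hε : |ε| * √n < 1)
    (hW : ∀ k ∈ Icc 2 n, levelWeight f k ≤ W) :
    |biasedExp f ε - biasedExp f 0 - ε * levelSum f 1| ≤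
      ε ^ 2 * (n * √W / (1 - |ε| * √n)) := by
  have levelSum_le (k : ℕ) : |levelSum f (k + 2)| ≤ n * √W * √n ^ k := by
    rcases lt_or_ge n (k + 2) with hk | hk
    · rw [levelSum_eq_zero_of_lt f hk, abs_zero]
      positivity
    · calc |levelSum f (k + 2)|
          ≤ √n ^ (k + 2) * √(levelWeight f (k + 2)) := abs_levelSum_le f _
        _ ≤ √n ^ (k + 2) * √W := by
            gcongr
            exact hW _ (mem_Icc.2 ⟨by lia, hk⟩)
        _ = n * √W * √n ^ k := by
            rw [pow_add, Real.sq_sqrt n.cast_nonneg]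
            ring
  rw [biasedExp_sub_linear, abs_mul, abs_sq]
  gcongr
  exact abs_sum_range_pow_mul_le (by positivity) (by positivity) hε fun k _ => levelSum_le k

end

/-- for nonzero |ε| ≤ 1/(2√n),
|(1/ε)(E_ε[f]−E_0[f]) − ∑_i f̂({i})| ≤ 2·|ε|·n·√(max_{2≤k≤n} ∑_{|S|=k} f̂(S)²). -/
theorem coin_deriv_error_le_maxlevel (n : ℕ) (hn : 0 < n) (f : (Fin n → Bool) → ℝ)
    (ε : ℝ) (hε0 : ε ≠ 0) (hε : |ε| ≤ 1 / (2 * Real.sqrt n)) :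
    |(1 / ε) * (biasedExp f ε - biasedExp f 0) - ∑ i : Fin n, walshCoeff f {i}| ≤
      2 * |ε| * n * Real.sqrt (⨆ k ∈ Finset.Icc 2 n,
        ∑ S ∈ Finset.univ.filter (fun S : Finset (Fin n) => S.card = k),
          walshCoeff f S ^ 2) := by
  set W := ⨆ k ∈ Icc 2 n, ∑ S : Finset (Fin n) with S.card = k, walshCoeff f S ^ 2
  have levelWeight_le : ∀ k ∈ Icc 2 n, levelWeight f k ≤ W := fun k hk =>
    le_ciSup_finset_mem (Icc 2 n) (levelWeight f) hk
  have ratio_le : |ε| * √n ≤ 1 / 2 := by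
    have : 0 < √(n : ℝ) := by positivity
    calc |ε| * √n ≤ 1 / (2 * √n) * √n := by gcongr
      _ = 1 / 2 := by field_simp
  have error_eq : (1 / ε) * (biasedExp f ε - biasedExp f 0) - ∑ i : Fin n, walshCoeff f {i} =
      (biasedExp f ε - biasedExp f 0 - ε * levelSum f 1) / ε := by
    rw [levelSum_one]
    field_simp
  rw [error_eq, abs_div, div_le_iff₀ (abs_pos.2 hε0)]
  calc |biasedExp f ε - biasedExp f 0 - ε * levelSum f 1|
      ≤ ε ^ 2 * (n * √W / (1 - |ε| * √n)) :=
        abs_biasedExp_sub_linear_le (by linarith) levelWeight_le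
    _ ≤ ε ^ 2 * (n * √W / (1 / 2)) := by
        gcongr
        linarith
    _ = 2 * |ε| * n * √W * |ε| := by
        rw [← sq_abs]
        ring
end

section
/- Let n be a positive integer, t ≥ 0, and let F be a set of functions f : {-1,1}^n → [-1,1] which is closed under restriction (i.e., for every f ∈ F, every coordinate i ∈ [n], and every b ∈ {-1,1}, the function x ↦ f(x₁,...,x_{i-1}, b, x_{i+1},...,x_n) also belongs to F) and which satisfies |∑_{i=1}^n f̂({i})| ≤ t for every f ∈ F. Then for every f ∈ F and every ε with 0 ≤ ε < 1, we have |E_ε[f] − E_0[f]| ≤ t · ln(1/(1−ε)). -/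
open Finset

/-!
Tossing an `(e + (1 - e) * u)`-biased coin amounts to fixing it to `1` with probability `e` and
tossing a `u`-biased coin otherwise. Hence `u ↦ E_{e + (1 - e) u}[f]` is a convex combination of the
functions `u ↦ E_u[g]`, where `g` runs over restrictions of `f`. The derivative of `u ↦ E_u[g]` at
`0` is `∑ i, ĝ({i})`, so that `(1 - e) * |d/de E_e[f]| ≤ t`, and integrating `t / (1 - e)` from `0`
to `ε` gives `t * log (1 / (1 - ε))`.
-/

section Calculus

variable {E : Type*} [NormedAddCommGroup E] [NormedSpace ℝ E]

lemma convex_setOf_norm_deriv_le (x t : ℝ) :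
    Convex ℝ {φ : ℝ → E | DifferentiableAt ℝ φ x ∧ ‖deriv φ x‖ ≤ t} := by
  rintro φ ⟨hφ, hφt⟩ ψ ⟨hψ, hψt⟩ a b ha hb hab
  refine ⟨(hφ.const_smul a).add (hψ.const_smul b), ?_⟩
  rw [deriv_add (hφ.const_smul a) (hψ.const_smul b), deriv_const_smul a hφ, deriv_const_smul b hψ]
  have mem_ball : a • deriv φ x + b • deriv ψ x ∈ Metric.closedBall (0 : E) t :=
    convex_closedBall 0 t (mem_closedBall_zero_iff.2 hφt) (mem_closedBall_zero_iff.2 hψt) ha hb hab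
  exact mem_closedBall_zero_iff.1 mem_ball

lemma norm_sub_le_mul_log_of_norm_deriv_le {g : ℝ → E} {t ε : ℝ} (hε₀ : 0 ≤ ε) (hε₁ : ε < 1)
    (hg : ∀ x ∈ Set.Icc 0 ε, DifferentiableAt ℝ g x)
    (hbound : ∀ x ∈ Set.Ico 0 ε, ‖deriv g x‖ ≤ t / (1 - x)) :
    ‖g ε - g 0‖ ≤ t * Real.log (1 / (1 - ε)) := by
  have primitive (x : ℝ) (hx : x < 1) :
      HasDerivAt (fun y : ℝ => t * -Real.log (1 - y)) (t / (1 - x)) x := by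
    have := (((hasDerivAt_id x).const_sub 1).log (sub_pos.2 hx).ne').neg.const_mul t
    exact this.congr_deriv (by simp only [id_eq]; ring)
  have := image_norm_le_of_norm_deriv_right_le_deriv_boundary' (a := 0) (b := ε)
    (f := fun y => g y - g 0) (f' := deriv g) (B' := fun x => t / (1 - x))
    (fun x hx => ((hg x hx).continuousAt.sub continuousAt_const).continuousWithinAt)
    (fun x hx => ((hg x (Set.Ico_subset_Icc_self hx)).hasDerivAt.sub_const _).hasDerivWithinAt)
    (by simp)
    (fun x hx => (primitive x (hx.2.trans_lt hε₁)).continuousAt.continuousWithinAt)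
    (fun x hx => (primitive x (hx.2.trans hε₁)).hasDerivWithinAt)
    hbound (Set.right_mem_Icc.2 hε₀)
  simpa only [one_div, Real.log_inv] using this

lemma hasDerivAt_prod_one_add_mul_div_two_zero {ι : Type*} [Fintype ι] (c : ι → ℝ) :
    HasDerivAt (fun ε : ℝ => ∏ i, (1 + ε * c i) / 2) ((2 ^ Fintype.card ι)⁻¹ * ∑ i, c i) 0 := by
  classical
  have factor (i : ι) : HasDerivAt (fun ε : ℝ => (1 + ε * c i) / 2) (c i / 2) 0 := by
    simpa using (((hasDerivAt_id (0 : ℝ)).mul_const (c i)).const_add 1).div_const 2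
  refine (HasDerivAt.fun_finsetProd fun i _ => factor i).congr_deriv ?_
  rw [mul_sum]
  refine sum_congr rfl fun i _ => ?_
  have two_pow : (2 : ℝ) ^ Fintype.card ι = 2 ^ (Fintype.card ι - 1) * 2 :=
    (pow_sub_one_mul (Fintype.card_pos_iff.2 ⟨i⟩).ne' 2).symm
  simp only [zero_mul, add_zero, one_div, prod_const, mem_univ, card_erase_of_mem, card_univ,
    smul_eq_mul, two_pow, mul_inv_rev, inv_pow]
  ring

end Calculus

section ProductBias

variable {ι : Type*} [Fintype ι]

/-- The probability of the outcome `x` when the coins `i` are independent and coin `i` has mean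
`p i`; the formula is kept for all real `p i`, where it may be negative. -/
noncomputable def biasWeight (p : ι → ℝ) (x : ι → Bool) : ℝ :=
  ∏ i, (1 + p i * sgn (x i)) / 2

variable [DecidableEq ι]

/-- The expectation of `f` under independent coins with individual means `p i`, which extends
`biasedExp` to coins of different biases. -/
noncomputable def productExp (f : (ι → Bool) → ℝ) (p : ι → ℝ) : ℝ :=
  ∑ x, f x * biasWeight p x

lemma biasWeight_update_left (p : ι → ℝ) (i : ι) (a : ℝ) (x : ι → Bool) :
    biasWeight (Function.update p i a) x =
      (1 + a * sgn (x i)) / 2 * ∏ j ∈ univ.erase i, (1 + p j * sgn (x j)) / 2 := by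
  rw [biasWeight, ← mul_prod_erase univ _ (mem_univ i), Function.update_self]
  congr 1
  exact prod_congr rfl fun j hj => by rw [Function.update_of_ne (ne_of_mem_erase hj)]

lemma biasWeight_update_affineComb (p : ι → ℝ) (i : ι) (a b e : ℝ) (x : ι → Bool) :
    biasWeight (Function.update p i ((1 - e) * a + e * b)) x =
      (1 - e) * biasWeight (Function.update p i a) x +
        e * biasWeight (Function.update p i b) x := by
  simp only [biasWeight_update_left]
  ring

lemma sgn_not (b : Bool) : sgn (!b) = -sgn b := by
  cases b <;> simp [sgn]

lemma biasWeight_update_neg (p : ι → ℝ) (i : ι) (a : ℝ) (x : ι → Bool) :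
    biasWeight (Function.update p i (-a)) x =
      biasWeight (Function.update p i a) (Function.update x i (!x i)) := by
  simp only [biasWeight_update_left, Function.update_self, sgn_not, neg_mul, mul_neg]
  congr 1
  exact prod_congr rfl fun j hj => by rw [Function.update_of_ne (ne_of_mem_erase hj)]

lemma productExp_update_affineComb (f : (ι → Bool) → ℝ) (p : ι → ℝ) (i : ι) (a b e : ℝ) :
    productExp f (Function.update p i ((1 - e) * a + e * b)) =
      (1 - e) * productExp f (Function.update p i a) +
        e * productExp f (Function.update p i b) := by
  simp only [productExp, biasWeight_update_affineComb, mul_sum, ← sum_add_distrib]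
  exact sum_congr rfl fun x _ => by ring

lemma productExp_restrict_update_neg (f : (ι → Bool) → ℝ) (p : ι → ℝ) (i : ι) (b : Bool) (a : ℝ) :
    productExp (fun x => f (Function.update x i b)) (Function.update p i (-a)) =
      productExp (fun x => f (Function.update x i b)) (Function.update p i a) := by
  have flip_involutive :
      Function.Involutive fun x : ι → Bool => Function.update x i (!x i) := fun x => by simp
  refine Fintype.sum_equiv flip_involutive.toPerm _ _ fun x => ?_
  simp [biasWeight_update_neg]

-- As a function of `a` the left-hand side is affine and even, hence constant.
lemma productExp_restrict_update (f : (ι → Bool) → ℝ) (p : ι → ℝ) (i : ι) (b : Bool) (a : ℝ) :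
    productExp (fun x => f (Function.update x i b)) (Function.update p i a) =
      productExp (fun x => f (Function.update x i b)) p := by
  have eq_at_zero (c : ℝ) :
      productExp (fun x => f (Function.update x i b)) (Function.update p i c) =
        productExp (fun x => f (Function.update x i b)) (Function.update p i 0) := by
    have midpoint :=
      productExp_update_affineComb (fun x => f (Function.update x i b)) p i c (-c) (1 / 2)
    rw [productExp_restrict_update_neg, show (1 - 1 / 2) * c + 1 / 2 * -c = 0 by ring] at midpoint
    linarith
  rw [eq_at_zero a, ← eq_at_zero (p i), Function.update_eq_self]

lemma productExp_update_one (f : (ι → Bool) → ℝ) (p : ι → ℝ) (i : ι) :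
    productExp f (Function.update p i 1) =
      productExp (fun x => f (Function.update x i true)) p := by
  rw [← productExp_restrict_update f p i true 1]
  refine sum_congr rfl fun x _ => ?_
  cases hx : x i
  · have weight_eq_zero : biasWeight (Function.update p i 1) x = 0 := by
      simp [biasWeight_update_left, hx, sgn]
    simp only [weight_eq_zero, mul_zero]
  · have update_eq : Function.update x i true = x := by rw [← hx, Function.update_eq_self]
    simp only [update_eq]

lemma productExp_update_add_mul (f : (ι → Bool) → ℝ) (p : ι → ℝ) (i : ι) (e : ℝ) :
    productExp f (Function.update p i (e + (1 - e) * p i)) =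
      (1 - e) * productExp f p +
        e * productExp (fun x => f (Function.update x i true)) p := by
  rw [show e + (1 - e) * p i = (1 - e) * p i + e * 1 by ring, productExp_update_affineComb,
    Function.update_eq_self, productExp_update_one]

end ProductBias

section BiasedExp

variable {n : ℕ}

lemma productExp_const (f : (Fin n → Bool) → ℝ) (ε : ℝ) :
    productExp f (fun _ => ε) = biasedExp f ε := rfl

lemma productExp_piecewise_mem_convexHull {F : Set ((Fin n → Bool) → ℝ)}
    (hrestr : ∀ f ∈ F, ∀ i, (fun x => f (Function.update x i true)) ∈ F)
    {e : ℝ} (he₀ : 0 ≤ e) (he₁ : e ≤ 1) (S : Finset (Fin n)) :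
    ∀ f ∈ F, (fun u : ℝ => productExp f (S.piecewise (fun _ => e + (1 - e) * u) fun _ => u)) ∈
      convexHull ℝ (biasedExp '' F) := by
  induction S using Finset.induction_on with
  | empty =>
    intro f hf
    simpa only [piecewise_empty, productExp_const] using
      subset_convexHull ℝ _ (Set.mem_image_of_mem biasedExp hf)
  | insert i S hi ih =>
    intro f hf
    convert convex_convexHull ℝ (biasedExp '' F) (ih f hf) (ih _ (hrestr f hf i))
      (sub_nonneg.2 he₁) he₀ (sub_add_cancel 1 e) using 1
    ext u
    have step := productExp_update_add_mul f
      (S.piecewise (fun _ => e + (1 - e) * u) fun _ => u) i e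
    rw [piecewise_eq_of_notMem _ _ _ hi] at step
    simpa only [piecewise_insert, Pi.add_apply, Pi.smul_apply, smul_eq_mul] using step

lemma biasedExp_add_mul_mem_convexHull {F : Set ((Fin n → Bool) → ℝ)}
    (hrestr : ∀ f ∈ F, ∀ i, (fun x => f (Function.update x i true)) ∈ F)
    {e : ℝ} (he₀ : 0 ≤ e) (he₁ : e ≤ 1) {f : (Fin n → Bool) → ℝ} (hf : f ∈ F) :
    (fun u => biasedExp f (e + (1 - e) * u)) ∈ convexHull ℝ (biasedExp '' F) := by
  simpa only [piecewise_univ, productExp_const] using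
    productExp_piecewise_mem_convexHull hrestr he₀ he₁ univ f hf

lemma differentiable_biasedExp (f : (Fin n → Bool) → ℝ) : Differentiable ℝ (biasedExp f) := by
  unfold biasedExp
  fun_prop

lemma deriv_biasedExp_zero (f : (Fin n → Bool) → ℝ) :
    deriv (biasedExp f) 0 = ∑ i, walshCoeff f {i} := by
  have derivative : HasDerivAt (biasedExp f)
      (∑ x, f x * ((2 ^ n)⁻¹ * ∑ i, sgn (x i))) 0 :=
    HasDerivAt.fun_sum fun x _ => by
      simpa only [Fintype.card_fin] using
        (hasDerivAt_prod_one_add_mul_div_two_zero fun i => sgn (x i)).const_mul (f x)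
  rw [derivative.deriv]
  simp only [walshCoeff, prod_singleton, mul_sum]
  rw [sum_comm]
  exact sum_congr rfl fun i _ => sum_congr rfl fun x _ => by ring

end BiasedExp

lemma abs_deriv_biasedExp_le {n : ℕ} {t : ℝ} {F : Set ((Fin n → Bool) → ℝ)}
    (hrestr : ∀ f ∈ F, ∀ i, (fun x => f (Function.update x i true)) ∈ F)
    (hsum : ∀ f ∈ F, |∑ i, walshCoeff f {i}| ≤ t) {f : (Fin n → Bool) → ℝ} (hf : f ∈ F)
    {e : ℝ} (he₀ : 0 ≤ e) (he₁ : e < 1) :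
    |deriv (biasedExp f) e| ≤ t / (1 - e) := by
  have hull_subset : convexHull ℝ (biasedExp '' F) ⊆
      {φ | DifferentiableAt ℝ φ 0 ∧ ‖deriv φ 0‖ ≤ t} := by
    refine convexHull_min ?_ (convex_setOf_norm_deriv_le 0 t)
    rintro _ ⟨g, hg, rfl⟩
    exact ⟨differentiable_biasedExp g 0, by
      simpa only [deriv_biasedExp_zero, Real.norm_eq_abs] using hsum g hg⟩
  have rescaled_le : ‖deriv (fun u => biasedExp f (e + (1 - e) * u)) 0‖ ≤ t :=
    (hull_subset (biasedExp_add_mul_mem_convexHull hrestr he₀ he₁.le hf)).2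
  have chain_rule :
      deriv (fun u => biasedExp f (e + (1 - e) * u)) 0 = (1 - e) * deriv (biasedExp f) e := by
    simpa only [mul_zero, add_zero, smul_eq_mul, deriv_comp_const_add] using
      deriv_comp_mul_left (1 - e) (fun v => biasedExp f (e + v)) 0
  rw [chain_rule, Real.norm_eq_abs, abs_mul, abs_of_pos (sub_pos.2 he₁)] at rescaled_le
  rwa [le_div_iff₀' (sub_pos.2 he₁)]

theorem coin_of_restriction_closed_general {n : ℕ} {t : ℝ} {F : Set ((Fin n → Bool) → ℝ)}
    (hrestr : ∀ f ∈ F, ∀ i, (fun x => f (Function.update x i true)) ∈ F)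
    (hsum : ∀ f ∈ F, |∑ i, walshCoeff f {i}| ≤ t) {f : (Fin n → Bool) → ℝ} (hf : f ∈ F)
    {ε : ℝ} (hε₀ : 0 ≤ ε) (hε₁ : ε < 1) :
    |biasedExp f ε - biasedExp f 0| ≤ t * Real.log (1 / (1 - ε)) :=
  norm_sub_le_mul_log_of_norm_deriv_le hε₀ hε₁ (fun x _ => differentiable_biasedExp f x) fun _ hx =>
    abs_deriv_biasedExp_le hrestr hsum hf hx.1 (hx.2.trans hε₁)

/-- Tal: if F is a class of [-1,1]-valued functions closed under
restriction with |∑_i f̂({i})| ≤ t for every f ∈ F, then for every f ∈ F and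
0 ≤ ε < 1, |E_ε[f] − E_0[f]| ≤ t·ln(1/(1−ε)). -/
theorem coin_of_restriction_closed (n : ℕ) (hn : 0 < n) (t : ℝ) (ht : 0 ≤ t)
    (F : Set ((Fin n → Bool) → ℝ))
    (hbdd : ∀ f ∈ F, ∀ x, f x ∈ Set.Icc (-1 : ℝ) 1)
    (hrestr : ∀ f ∈ F, ∀ i : Fin n, ∀ b : Bool,
      (fun x => f (Function.update x i b)) ∈ F)
    (hsum : ∀ f ∈ F, |∑ i : Fin n, walshCoeff f {i}| ≤ t) :
    ∀ f ∈ F, ∀ ε : ℝ, 0 ≤ ε → ε < 1 →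
      |biasedExp f ε - biasedExp f 0| ≤ t * Real.log (1 / (1 - ε)) :=
  fun _ hf _ hε₀ hε₁ =>
    coin_of_restriction_closed_general (fun f hf i => hrestr f hf i true) hsum hf hε₀ hε₁
end

section
/- Let m be a positive integer and g : {-1,1}^m → [-1,1]. Let g̃ be the random function {-1,1}^m → {-1,1} obtained by independently, for each x ∈ {-1,1}^m, setting g̃(x) = 1 with probability (1+g(x))/2 and g̃(x) = -1 with probability (1−g(x))/2 (so that E[g̃(x)] = g(x)). Then for every nonempty collection T ⊆ 2^{[m]} of subsets of [m] and every ε > 0, the probability that |∑_{S∈T} ĝ̃(S) − ∑_{S∈T} ĝ(S)| ≥ ε is at most 2·exp(−2^{m−1}·ε²/|T|). -/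
open Finset

/-!
By linearity, the error in the sum of Fourier coefficients is a weighted sum
`∑ x, c x * (g̃ x - g x)` of independent centred signs, where
`c x = 2⁻ᵐ * ∑ S ∈ T, χ_S x`. By Hoeffding's lemma each term is sub-Gaussian with variance proxy
`(c x) ^ 2`, and by Parseval these proxies add up to `2⁻ᵐ * |T|`; the two-sided Chernoff bound for
the sum is the claim.
-/

section SubGaussian

open MeasureTheory ProbabilityTheory
open scoped NNReal

theorem measureReal_le_abs_le_of_hasSubgaussianMGF {Ω : Type*} [MeasurableSpace Ω] {μ : Measure Ω}
    {X : Ω → ℝ} {c : ℝ≥0} (h : HasSubgaussianMGF X c μ) {ε : ℝ} (hε : 0 ≤ ε) :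
    μ.real {ω | ε ≤ |X ω|} ≤ 2 * Real.exp (-ε ^ 2 / (2 * c)) := by
  calc μ.real {ω | ε ≤ |X ω|} = μ.real ({ω | ε ≤ X ω} ∪ {ω | ε ≤ (-X) ω}) := by
        simp only [le_abs, Set.ofPred_or, Pi.neg_apply]
    _ ≤ μ.real {ω | ε ≤ X ω} + μ.real {ω | ε ≤ (-X) ω} := measureReal_union_le _ _
    _ ≤ Real.exp (-ε ^ 2 / (2 * c)) + Real.exp (-ε ^ 2 / (2 * c)) :=
        add_le_add (h.measure_ge_le hε) (h.neg.measure_ge_le hε)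
    _ = 2 * Real.exp (-ε ^ 2 / (2 * c)) := (two_mul _).symm

theorem hasSubgaussianMGF_sum_pi {ι : Type*} [Fintype ι] {Ω : ι → Type*}
    [∀ i, MeasurableSpace (Ω i)] {μ : ∀ i, Measure (Ω i)} [∀ i, IsProbabilityMeasure (μ i)]
    {X : ∀ i, Ω i → ℝ} {c : ι → ℝ≥0} (h : ∀ i, HasSubgaussianMGF (X i) (c i) (μ i)) :
    HasSubgaussianMGF (fun ω ↦ ∑ i, X i (ω i)) (∑ i, c i) (Measure.pi μ) := by
  have h_indep : iIndepFun (fun i ω ↦ X i (ω i)) (Measure.pi μ) :=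
    iIndepFun_pi fun i ↦ (h i).aemeasurable
  refine HasSubgaussianMGF.sum_of_iIndepFun h_indep fun i _ ↦ ?_
  refine HasSubgaussianMGF.of_map (X := X i) (measurable_pi_apply i).aemeasurable ?_
  rw [(measurePreserving_eval μ i).map_eq]
  exact h i

end SubGaussian

section Rounding

open MeasureTheory ProbabilityTheory

/-- The law of a random sign of mean `a ∈ [-1, 1]`, where `true` encodes `1` and `false`
encodes `-1` as in `sgn`. -/
noncomputable def signMeasure (a : Set.Icc (-1 : ℝ) 1) : Measure Bool :=
  bernoulliMeasure true false ⟨(1 + a) / 2, by linarith [a.2.1], by linarith [a.2.2]⟩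

instance (a : Set.Icc (-1 : ℝ) 1) : IsProbabilityMeasure (signMeasure a) := by
  unfold signMeasure
  infer_instance

theorem signMeasure_real_singleton (a : Set.Icc (-1 : ℝ) 1) (b : Bool) :
    (signMeasure a).real {b} = if b then (1 + (a : ℝ)) / 2 else (1 - a) / 2 := by
  cases b
  · suffices (1 : ℝ) - (1 + a) / 2 = (1 - a) / 2 by simpa [signMeasure]
    ring
  · simp [signMeasure]

theorem integral_sgn_signMeasure (a : Set.Icc (-1 : ℝ) 1) : ∫ b, sgn b ∂signMeasure a = a := by
  simp only [signMeasure, integral_bernoulliMeasure, sgn, smul_eq_mul, if_true, Bool.false_eq_true,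
    if_false]
  ring

theorem sgn_mem_Icc (b : Bool) : sgn b ∈ Set.Icc (-1 : ℝ) 1 := by
  cases b <;> simp [sgn]

theorem hasSubgaussianMGF_sgn_sub (a : Set.Icc (-1 : ℝ) 1) :
    HasSubgaussianMGF (fun b ↦ sgn b - a) 1 (signMeasure a) := by
  have hoeffding := hasSubgaussianMGF_of_mem_Icc (μ := signMeasure a) (X := sgn)
    (by fun_prop) (ae_of_all _ sgn_mem_Icc)
  have proxy_eq_one : (‖(1 : ℝ) - (-1)‖₊ / 2) ^ 2 = 1 := by
    ext
    norm_num
  rwa [integral_sgn_signMeasure, proxy_eq_one] at hoeffding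

variable {ι : Type*} [Fintype ι]

/-- The law of the randomized rounding of `g : ι → [-1, 1]`: independent random signs indexed by
`ι`, the one at `x` having mean `g x`. -/
noncomputable def roundingMeasure (g : ι → Set.Icc (-1 : ℝ) 1) : Measure (ι → Bool) :=
  Measure.pi fun x ↦ signMeasure (g x)

theorem roundingMeasure_real_setOf [DecidableEq ι] (g : ι → Set.Icc (-1 : ℝ) 1)
    (p : (ι → Bool) → Prop) [DecidablePred p] :
    (roundingMeasure g).real {ω | p ω} =
      ∑ ω with p ω, ∏ x, if ω x then (1 + (g x : ℝ)) / 2 else (1 - g x) / 2 := by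
  have real_singleton (ω : ι → Bool) : (roundingMeasure g).real {ω} =
      ∏ x, if ω x then (1 + (g x : ℝ)) / 2 else (1 - g x) / 2 := by
    simp only [← signMeasure_real_singleton, roundingMeasure, measureReal_def,
      Measure.pi_singleton, ENNReal.toReal_prod]
  have : SigmaFinite (roundingMeasure g) := by
    unfold roundingMeasure
    infer_instance
  simp only [← real_singleton, sum_measureReal_singleton, coe_filter_univ]

theorem hasSubgaussianMGF_sum_mul_sgn_sub (g : ι → Set.Icc (-1 : ℝ) 1) (c : ι → ℝ) :
    HasSubgaussianMGF (fun ω ↦ ∑ x, c x * (sgn (ω x) - g x)) (∑ x, ‖c x‖₊ ^ 2)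
      (roundingMeasure g) := by
  refine hasSubgaussianMGF_sum_pi (X := fun x b ↦ c x * (sgn b - g x)) fun x ↦ ?_
  have proxy_eq : ‖c x‖₊ ^ 2 = .mk (c x ^ 2) (sq_nonneg _) * 1 := by
    ext
    simp
  rw [proxy_eq]
  exact (hasSubgaussianMGF_sgn_sub (g x)).const_mul (c x)

theorem roundingMeasure_real_le_abs_sum_le (g : ι → Set.Icc (-1 : ℝ) 1) (c : ι → ℝ) {ε : ℝ}
    (hε : 0 ≤ ε) :
    (roundingMeasure g).real {ω | ε ≤ |∑ x, c x * (sgn (ω x) - g x)|} ≤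
      2 * Real.exp (-ε ^ 2 / (2 * ∑ x, c x ^ 2)) := by
  simpa using
    measureReal_le_abs_le_of_hasSubgaussianMGF (hasSubgaussianMGF_sum_mul_sgn_sub g c) hε

end Rounding

section Walsh

variable {ι : Type*}

/-- The Walsh character `χ_S(x) = ∏_{i ∈ S} x_i` on the cube `{-1, 1}^ι`. -/
noncomputable def walshChar (S : Finset ι) (x : ι → Bool) : ℝ :=
  ∏ i ∈ S, sgn (x i)

variable [DecidableEq ι]

theorem walshChar_eq_prod_ite {S U : Finset ι} (hSU : S ⊆ U) (x : ι → Bool) :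
    walshChar S x = ∏ i ∈ U, if i ∈ S then sgn (x i) else 1 := by
  rw [prod_ite_mem, inter_eq_right.2 hSU, walshChar]

theorem walshChar_mul_walshChar (S S' : Finset ι) (x : ι → Bool) :
    walshChar S x * walshChar S' x = walshChar (symmDiff S S') x := by
  have sgn_mul_self (b : Bool) : sgn b * sgn b = 1 := by
    cases b <;> simp [sgn]
  rw [walshChar_eq_prod_ite (subset_union_left : S ⊆ S ∪ S'),
    walshChar_eq_prod_ite (subset_union_right : S' ⊆ S ∪ S'),
    walshChar_eq_prod_ite (symmDiff_le_sup : symmDiff S S' ⊆ S ∪ S'), ← prod_mul_distrib]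
  refine prod_congr rfl fun i _ ↦ ?_
  by_cases hS : i ∈ S <;> by_cases hS' : i ∈ S' <;> simp [mem_symmDiff, hS, hS', sgn_mul_self]

theorem sum_walshChar [Fintype ι] (S : Finset ι) :
    ∑ x, walshChar S x = if S = ∅ then 2 ^ Fintype.card ι else 0 := by
  have sum_factor (i : ι) : ∑ b, (if i ∈ S then sgn b else 1) = if i ∈ S then 0 else 2 := by
    split_ifs <;> simp [sgn]
  simp only [walshChar_eq_prod_ite (subset_univ S)]
  rw [← Fintype.prod_sum fun i b ↦ if i ∈ S then sgn b else 1]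
  simp only [sum_factor]
  split_ifs with hS
  · simp [hS]
  · obtain ⟨i, hi⟩ := nonempty_iff_ne_empty.2 hS
    exact prod_eq_zero (mem_univ i) (if_pos hi)

theorem sum_walshChar_mul_walshChar [Fintype ι] (S S' : Finset ι) :
    ∑ x, walshChar S x * walshChar S' x = if S = S' then 2 ^ Fintype.card ι else 0 := by
  simp only [walshChar_mul_walshChar, sum_walshChar, ← bot_eq_empty, symmDiff_eq_bot]

theorem sum_sq_sum_mul_walshChar [Fintype ι] (T : Finset (Finset ι))
    (a : Finset ι → ℝ) :
    ∑ x, (∑ S ∈ T, a S * walshChar S x) ^ 2 = 2 ^ Fintype.card ι * ∑ S ∈ T, a S ^ 2 := by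
  calc ∑ x, (∑ S ∈ T, a S * walshChar S x) ^ 2
      = ∑ x, ∑ S ∈ T, ∑ S' ∈ T, a S * a S' * (walshChar S x * walshChar S' x) := by
        simp only [sq, sum_mul_sum, mul_mul_mul_comm]
    _ = ∑ S ∈ T, ∑ S' ∈ T, a S * a S' * ∑ x, walshChar S x * walshChar S' x := by
        rw [sum_comm]
        simp only [sum_comm (s := univ), mul_sum]
    _ = ∑ S ∈ T, a S * a S * 2 ^ Fintype.card ι := by
        simp [sum_walshChar_mul_walshChar]
    _ = 2 ^ Fintype.card ι * ∑ S ∈ T, a S ^ 2 := by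
        simp only [← sq, ← sum_mul, mul_comm]

end Walsh

section FourierSum

variable {n : ℕ}

/-- The weight of the point `x` in `∑ S ∈ T, f̂(S)`, as a linear functional of the values of
`f : {-1, 1}^n → ℝ`. -/
noncomputable def fourierSumWeight (T : Finset (Finset (Fin n))) (x : Fin n → Bool) : ℝ :=
  ∑ S ∈ T, (2 ^ n : ℝ)⁻¹ * walshChar S x

theorem sum_walshCoeff (f : (Fin n → Bool) → ℝ) (T : Finset (Finset (Fin n))) :
    ∑ S ∈ T, walshCoeff f S = ∑ x, fourierSumWeight T x * f x := by
  simp only [walshCoeff, fourierSumWeight, walshChar, mul_sum, sum_mul]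
  rw [sum_comm]
  exact sum_congr rfl fun x _ ↦ sum_congr rfl fun S _ ↦ by ring

theorem sum_walshCoeff_sub_sum_walshCoeff (f g : (Fin n → Bool) → ℝ)
    (T : Finset (Finset (Fin n))) :
    ∑ S ∈ T, walshCoeff f S - ∑ S ∈ T, walshCoeff g S =
      ∑ x, fourierSumWeight T x * (f x - g x) := by
  simp only [sum_walshCoeff, mul_sub, sum_sub_distrib]

theorem sum_fourierSumWeight_sq (T : Finset (Finset (Fin n))) :
    ∑ x, fourierSumWeight T x ^ 2 = (2 ^ n : ℝ)⁻¹ * #T := by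
  simp only [fourierSumWeight, sum_sq_sum_mul_walshChar, Fintype.card_fin, sum_const, nsmul_eq_mul]
  field_simp

end FourierSum

/-- randomized rounding of g : {-1,1}^m → [-1,1] to a Boolean
function g̃ (independently at each point, with E[g̃(x)] = g(x)) preserves sums
of Fourier coefficients: for any nonempty collection T of subsets of [m] and
ε > 0, the probability (of the product measure over outcomes ω, where ω(x)
encodes the sign g̃(x)) that |∑_{S∈T} ĝ̃(S) − ∑_{S∈T} ĝ(S)| ≥ ε is at most
2·exp(−2^{m−1}ε²/|T|). -/
theorem rounding_fourier_sum_concentration (m : ℕ) (hm : 0 < m)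
    (g : (Fin m → Bool) → ℝ) (hg : ∀ x, g x ∈ Set.Icc (-1 : ℝ) 1)
    (T : Finset (Finset (Fin m))) (hT : T.Nonempty) (ε : ℝ) (hε : 0 < ε) :
    ∑ ω ∈ Finset.univ.filter (fun ω : (Fin m → Bool) → Bool =>
        ε ≤ |(∑ S ∈ T, walshCoeff (fun x => sgn (ω x)) S) -
              ∑ S ∈ T, walshCoeff g S|),
      ∏ x : Fin m → Bool, (if ω x then (1 + g x) / 2 else (1 - g x) / 2) ≤
      2 * Real.exp (-((2 : ℝ) ^ (m - 1) * ε ^ 2 / T.card)) := by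
  lift g to (Fin m → Bool) → Set.Icc (-1 : ℝ) 1 using hg
  have exponent_eq : -ε ^ 2 / (2 * ((2 ^ m : ℝ)⁻¹ * #T)) = -((2 : ℝ) ^ (m - 1) * ε ^ 2 / #T) := by
    rw [← mul_pow_sub_one hm.ne']
    field_simp
  rw [← roundingMeasure_real_setOf, ← exponent_eq, ← sum_fourierSumWeight_sq]
  simp only [sum_walshCoeff_sub_sum_walshCoeff]
  exact roundingMeasure_real_le_abs_sum_le g (fourierSumWeight T) hε.le
end
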